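/- Let 2 ≤ N ≤ d and B > 1. There exists B₁ > 1, depending only on B, N and d, such that for every γ ∈ 𝔊(B,N), every s₀ ∈ I and every 0 < ρ ≤ B^{−2d} with [s₀ − ρ, s₀ + ρ] ⊆ I, the rescaled curve γ̃(s) := T^{−1}(γ(s₀ + ρ s) − γ(s₀)) belongs to 𝔊(B₁, N−1). -/

import Mathlib

open MeasureTheory Real Matrix
open scoped RealInnerProductSpace ENNReal

noncomputable section

abbrev E (d : ℕ) : Type := EuclideanSpace ℝ (Fin d)

def segI : Set ℝ := Set.Icc (-1) 1

/-- The class of curves 𝔊(B,L): `C^{2d}` bounds by `B` and the sum of squares of the `L×L`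
minors of `(γ⁽¹⁾(s) ⋯ γ⁽ᴸ⁾(s))`, i.e. the Gram determinant, at least `B⁻²`. -/
def CurveClass {d : ℕ} (B : ℝ) (L : ℕ) (γ : ℝ → E d) : Prop :=
  ContDiff ℝ ((2 * d : ℕ) : ℕ∞) γ ∧
  (∀ j ≤ 2 * d, ∀ s ∈ segI, ‖iteratedDeriv j γ s‖ ≤ B) ∧
  (∀ s ∈ segI,
    (B ^ 2)⁻¹ ≤
      (((Matrix.of fun i (j : Fin L) => iteratedDeriv ((j : ℕ) + 1) γ s i))ᵀ *
        (Matrix.of fun (i : Fin d) (j : Fin L) => iteratedDeriv ((j : ℕ) + 1) γ s i)).det)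

/-- The sum of the squares of all maximal minors, over all (ordered) choices of rows. -/
def minorSqSum {m : Type*} [Fintype m] {L : ℕ} (M : Matrix m (Fin L) ℝ) : ℝ :=
  ∑ f : Fin L → m, (M.submatrix f id).det ^ 2

lemma det_mul_eq_sum_submatrix {m : Type*} [Fintype m] {L : ℕ}
    (A : Matrix (Fin L) m ℝ) (Z : Matrix m (Fin L) ℝ) :
    (A * Z).det = ∑ g : Fin L → m, (∏ j, A j (g j)) * (Z.submatrix g id).det := by
  have h1 : (A * Z).det = (detRowAlternating (n := Fin L) (R := ℝ)).toMultilinearMap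
      (fun i => ∑ k, A i k • Z k) := by
    change (A * Z).det = det (fun i => ∑ k, A i k • Z k)
    congr 1
    ext i j
    simp [Matrix.mul_apply]
  rw [h1, MultilinearMap.map_sum]
  exact Finset.sum_congr rfl fun g _ => by
    rw [MultilinearMap.map_smul_univ]; rfl

/-- A symmetrised form of the Cauchy–Binet formula for the Gram determinant. -/
lemma factorial_mul_det_gram {m : Type*} [Fintype m] {L : ℕ} (M : Matrix m (Fin L) ℝ) :
    (L.factorial : ℝ) * (Mᵀ * M).det = minorSqSum M := by
  have key : ∀ σ : Equiv.Perm (Fin L), (Mᵀ * M).det =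
      ∑ g : Fin L → m, ((Equiv.Perm.sign σ : ℤ) : ℝ) * (∏ j, M (g (σ j)) j) *
        (M.submatrix g id).det := by
    intro σ
    rw [det_mul_eq_sum_submatrix,
      ← Equiv.sum_comp (Equiv.arrowCongr σ.symm (Equiv.refl m))]
    refine Finset.sum_congr rfl fun g _ => ?_
    have : M.submatrix (σ.symm.arrowCongr (Equiv.refl m) g) id =
        (M.submatrix g id).submatrix σ id := by
      ext i j; simp [Equiv.arrowCongr]
    rw [this, det_permute]
    simp [Equiv.arrowCongr]
    ring
  calc (L.factorial : ℝ) * (Mᵀ * M).det = ∑ _σ : Equiv.Perm (Fin L), (Mᵀ * M).det := by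
        simp [Fintype.card_perm]
    _ = _ := by
        rw [Finset.sum_congr rfl fun σ _ => key σ, Finset.sum_comm]
        refine Finset.sum_congr rfl fun g _ => ?_
        rw [← Finset.sum_mul, sq, Matrix.det_apply' (M.submatrix g id)]
        simp

lemma minorSqSum_nonneg {m : Type*} [Fintype m] {L : ℕ} (M : Matrix m (Fin L) ℝ) :
    0 ≤ minorSqSum M :=
  Finset.sum_nonneg fun _ _ => sq_nonneg _

lemma minorSqSum_mul_le {m n : Type*} [Fintype m] [Fintype n] {L : ℕ} (A : Matrix m n ℝ)
    (Z : Matrix n (Fin L) ℝ) {C : ℝ} (hA : ∀ i k, |A i k| ≤ C) :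
    minorSqSum (A * Z) ≤
      (Fintype.card m : ℝ) ^ L * ((Fintype.card n : ℝ) ^ L * (C ^ L) ^ 2) * minorSqSum Z := by
  have h : ∀ f : Fin L → m, ((A * Z).submatrix f id).det ^ 2 ≤
      ((Fintype.card n : ℝ) ^ L * (C ^ L) ^ 2) * minorSqSum Z := by
    intro f
    have e : (A * Z).submatrix f id = A.submatrix f id * Z := by
      ext i j; simp [Matrix.mul_apply]
    rw [e, det_mul_eq_sum_submatrix]
    refine (sq_sum_le_card_mul_sum_sq).trans ?_
    rw [mul_assoc]
    simp only [Finset.card_univ, Fintype.card_pi, Finset.prod_const, Fintype.card_fin,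
      Nat.cast_pow]
    gcongr
    rw [minorSqSum, Finset.mul_sum]
    gcongr with g
    rw [mul_pow]
    refine mul_le_mul_of_nonneg_right ?_ (sq_nonneg _)
    refine sq_le_sq.2 (le_trans ?_ (le_abs_self _))
    rw [Finset.abs_prod]
    calc ∏ j, |A.submatrix f id j (g j)| ≤ ∏ _j : Fin L, C :=
          Finset.prod_le_prod (fun _ _ => abs_nonneg _) fun j _ => hA _ _
      _ = C ^ L := by simp
  calc minorSqSum (A * Z) ≤ ∑ _f : Fin L → m,
        ((Fintype.card n : ℝ) ^ L * (C ^ L) ^ 2) * minorSqSum Z :=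
        Finset.sum_le_sum fun f _ => h f
    _ = _ := by simp; ring

lemma minorSqSum_succ_le {m : Type*} [Fintype m] {L : ℕ} (M : Matrix m (Fin (L + 1)) ℝ) {B : ℝ}
    (hM : ∀ i, |M i (Fin.last L)| ≤ B) :
    minorSqSum M ≤ (Fintype.card m : ℝ) ^ (L + 1) * ((L + 1) ^ 2 * B ^ 2) *
      minorSqSum (M.submatrix id Fin.castSucc) := by
  have h : ∀ f : Fin (L + 1) → m, (M.submatrix f id).det ^ 2 ≤
      ((L + 1) ^ 2 * B ^ 2) * minorSqSum (M.submatrix id Fin.castSucc) := by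
    intro f
    rw [det_succ_column _ (Fin.last L)]
    refine (sq_sum_le_card_mul_sum_sq).trans ?_
    have : ∀ i : Fin (L + 1), ((-1 : ℝ) ^ ((i : ℕ) + (Fin.last L : ℕ)) *
        M.submatrix f id i (Fin.last L) * ((M.submatrix f id).submatrix i.succAbove
          (Fin.last L).succAbove).det) ^ 2 ≤
          B ^ 2 * minorSqSum (M.submatrix id Fin.castSucc) := by
      intro i
      rw [mul_pow, mul_pow, ← pow_mul, mul_comm _ 2, pow_mul]
      simp only [even_two, Even.neg_pow, one_pow, one_mul]
      refine mul_le_mul ?_ ?_ (sq_nonneg _) (sq_nonneg _)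
      · exact sq_le_sq.2 ((hM _).trans (le_abs_self _))
      · have e : (M.submatrix f id).submatrix i.succAbove (Fin.last L).succAbove =
            (M.submatrix id Fin.castSucc).submatrix (f ∘ i.succAbove) id := by
          ext; simp
        rw [e]
        exact Finset.single_le_sum
          (f := fun f => ((M.submatrix id Fin.castSucc).submatrix f id).det ^ 2)
          (fun _ _ => sq_nonneg _) (Finset.mem_univ _)
    refine (mul_le_mul_of_nonneg_left (Finset.sum_le_sum fun i _ => this i)
      (by positivity)).trans_eq ?_
    simp
    ring
  calc minorSqSum M ≤ ∑ _f : Fin (L + 1) → m,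
        ((L + 1) ^ 2 * B ^ 2) * minorSqSum (M.submatrix id Fin.castSucc) :=
        Finset.sum_le_sum fun f _ => h f
    _ = _ := by simp; ring

/-- The exponents of the anisotropic scaling in the frame made of `N` curve derivatives and the
standard basis. -/
def frameExponent (N d : ℕ) : Fin N ⊕ Fin d → ℕ :=
  Sum.elim (fun i => (i : ℕ) + 1) fun _ => N

lemma sum_le_sum_frameExponent {N d L : ℕ} (hL : L ≤ N) (g : Fin L → Fin N ⊕ Fin d)
    (hg : Function.Injective g) :
    ∑ j : Fin L, ((j : ℕ) + 1) ≤ ∑ j, frameExponent N d (g j) := by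
  let σ := Tuple.sort fun j => frameExponent N d (g j)
  have hσ : Monotone ((fun j => frameExponent N d (g j)) ∘ σ) := Tuple.monotone_sort _
  rw [← Equiv.sum_comp σ fun j => frameExponent N d (g j)]
  refine Finset.sum_le_sum fun j _ => ?_
  by_contra! hlt
  have hsmall : ∀ i : Fin L, i ≤ j → ∃ k : ℕ, k < j ∧ ∃ h : k < N, g (σ i) = Sum.inl ⟨k, h⟩ := by
    intro i hi
    have h1 : frameExponent N d (g (σ i)) ≤ frameExponent N d (g (σ j)) := hσ hi
    have hj := j.2
    rcases hk : g (σ i) with k | k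
    · refine ⟨k, ?_, k.2, rfl⟩
      rw [hk] at h1
      simp only [frameExponent, Sum.elim_inl] at h1 hlt
      omega
    · rw [hk] at h1
      simp only [frameExponent, Sum.elim_inr] at h1 hlt
      omega
  choose! k hk2 hkN hk1 using hsmall
  have hcard := Finset.card_le_card_of_injOn (s := Finset.Iic j) (t := Finset.range j)
    k (fun i hi => by simpa using hk2 i (by simpa using hi)) (by
      intro a ha b hb hab
      have ha' : a ≤ j := by simpa using ha
      have hb' : b ≤ j := by simpa using hb
      exact σ.injective (hg (by simp only [hk1 a ha', hk1 b hb', hab])))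
  simp at hcard

lemma minorSqSum_scaled_le {N d L : ℕ} (hL : L ≤ N) {ρ : ℝ} (hρ : 0 < ρ) (hρ1 : ρ ≤ 1)
    (Y : Matrix (Fin N ⊕ Fin d) (Fin L) ℝ) :
    minorSqSum (Matrix.of fun k (j : Fin L) =>
      ρ ^ frameExponent N d k * ((ρ ^ ((j : ℕ) + 1))⁻¹ * Y k j)) ≤
      minorSqSum Y := by
  refine Finset.sum_le_sum fun g _ => ?_
  by_cases hg : Function.Injective g
  · have e : (Matrix.of fun k (j : Fin L) => ρ ^ frameExponent N d k *
        ((ρ ^ ((j : ℕ) + 1))⁻¹ * Y k j)).submatrix g id =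
        Matrix.of fun i j => ρ ^ frameExponent N d (g i) *
          (Matrix.of fun i (j : Fin L) => (ρ ^ ((j : ℕ) + 1))⁻¹ * Y.submatrix g id i j) i j := by
      ext; simp
    rw [e, det_mul_column, det_mul_row fun j : Fin L => (ρ ^ ((j : ℕ) + 1))⁻¹, ← mul_assoc,
      mul_pow]
    refine mul_le_of_le_one_left (sq_nonneg _) (pow_le_one₀ ?_ ?_)
    · exact mul_nonneg (Finset.prod_nonneg fun _ _ => by positivity)
        (Finset.prod_nonneg fun _ _ => by positivity)
    · rw [Finset.prod_inv_distrib, Finset.prod_pow_eq_pow_sum, Finset.prod_pow_eq_pow_sum,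
        ← div_eq_mul_inv, div_le_one (by positivity)]
      exact pow_le_pow_of_le_one hρ.le hρ1 (sum_le_sum_frameExponent hL g hg)
  · obtain ⟨a, b, hab, hne⟩ : ∃ a b, g a = g b ∧ a ≠ b := by
      simpa [Function.Injective] using hg
    rw [det_zero_of_row_eq hne (by ext; simp [hab]), zero_pow two_ne_zero]
    exact sq_nonneg _

/-- Bounded vectors with Gram determinant bounded below admit a bounded coordinate
matrix `A`: subtracting the combination with coefficients `A *ᵥ v` projects `v` orthogonally. -/
lemma exists_bounded_coords (d N : ℕ) {B : ℝ} (hB : 1 < B) :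
    ∃ C ≥ 1, ∀ Γ : Fin N → E d, (∀ i, ‖Γ i‖ ≤ B) →
      (B ^ 2)⁻¹ ≤ ((Matrix.of fun k i => Γ i k)ᵀ * (Matrix.of fun k i => Γ i k)).det →
      ∃ A : Matrix (Fin N) (Fin d) ℝ, (∀ i k, |A i k| ≤ C) ∧
        ∀ (v : E d) (i : Fin N), ⟪Γ i, v - ∑ l, (A *ᵥ v.ofLp) l • Γ l⟫ = 0 := by
  set x : ℝ := d * B ^ 2 + 1 with hx
  have hx1 : 1 ≤ x := by rw [hx]; nlinarith [sq_nonneg B, (Nat.cast_nonneg d : (0 : ℝ) ≤ d)]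
  have hB0 : 0 < B := by linarith
  refine ⟨N * (B ^ 2 * (N.factorial * x ^ N) * B) + 1, ?_, fun Γ hΓ hdet => ?_⟩
  · have : 0 ≤ N * (B ^ 2 * (N.factorial * x ^ N) * B) := by positivity
    linarith
  set M : Matrix (Fin d) (Fin N) ℝ := Matrix.of fun k i => Γ i k with hM
  have hMb : ∀ k i, |M k i| ≤ B := fun k i => (PiLp.norm_apply_le (Γ i) k).trans (hΓ i)
  set G := Mᵀ * M with hG
  have hdet0 : 0 < G.det := lt_of_lt_of_le (by positivity) hdet
  have hGb : ∀ i j, |G i j| ≤ x := by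
    intro i j
    rw [hG, Matrix.mul_apply]
    refine (Finset.abs_sum_le_sum_abs _ _).trans ?_
    calc ∑ k, |Mᵀ i k * M k j| ≤ ∑ _k : Fin d, B ^ 2 := by
          refine Finset.sum_le_sum fun k _ => ?_
          rw [abs_mul, sq]
          exact mul_le_mul (hMb k i) (hMb k j) (abs_nonneg _) hB0.le
      _ ≤ x := by simp [hx]
  have hadj : ∀ i j, |G.adjugate i j| ≤ N.factorial * x ^ N := by
    intro i j
    rw [adjugate_apply]
    have := Matrix.det_le (A := G.updateRow j (Pi.single i 1)) (abv := AbsoluteValue.abs) (x := x)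
      (by
        intro a b
        rw [Matrix.updateRow_apply]
        split_ifs
        · rw [Pi.single_apply]
          split_ifs <;> simp <;> linarith
        · exact hGb a b)
    simpa using this
  have hinv : ∀ i j, |G⁻¹ i j| ≤ B ^ 2 * (N.factorial * x ^ N) := by
    intro i j
    rw [Matrix.inv_def, Ring.inverse_eq_inv', Matrix.smul_apply, smul_eq_mul, abs_mul,
      abs_of_pos (inv_pos.2 hdet0)]
    exact mul_le_mul (inv_le_of_inv_le₀ (by positivity) hdet) (hadj i j) (abs_nonneg _)
      (by positivity)
  refine ⟨G⁻¹ * Mᵀ, fun i k => ?_, fun v i => ?_⟩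
  · rw [Matrix.mul_apply]
    refine (Finset.abs_sum_le_sum_abs _ _).trans ?_
    calc ∑ j, |G⁻¹ i j * Mᵀ j k| ≤ ∑ _j : Fin N, B ^ 2 * (N.factorial * x ^ N) * B := by
          refine Finset.sum_le_sum fun j _ => ?_
          rw [abs_mul]
          exact mul_le_mul (hinv i j) (hMb k j) (abs_nonneg _) (by positivity)
      _ ≤ _ := by simp
  · have h1 : G *ᵥ ((G⁻¹ * Mᵀ) *ᵥ v.ofLp) = Mᵀ *ᵥ v.ofLp := by
      rw [Matrix.mulVec_mulVec, ← Matrix.mul_assoc, Matrix.mul_nonsing_inv _ hdet0.ne'.isUnit,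
        Matrix.one_mul]
    have h2 := congrFun h1 i
    have h3 : ∀ l, ⟪Γ i, Γ l⟫ = G i l := by
      intro l
      simp [hG, hM, Matrix.mul_apply, PiLp.inner_apply, mul_comm]
    have h4 : ⟪Γ i, v⟫ = (Mᵀ *ᵥ v.ofLp) i := by
      simp [hM, Matrix.mulVec, dotProduct, PiLp.inner_apply, mul_comm]
    rw [inner_sub_right, inner_sum, h4, ← h2, sub_eq_zero]
    simp only [inner_smul_right, h3]
    simp [Matrix.mulVec, dotProduct, mul_comm]

lemma abs_mulVec_le {m n : ℕ} {A : Matrix (Fin m) (Fin n) ℝ} {C : ℝ} (hA : ∀ i k, |A i k| ≤ C)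
    (v : E n) (i : Fin m) : |(A *ᵥ v.ofLp) i| ≤ n * C * ‖v‖ := by
  rw [Matrix.mulVec, dotProduct]
  refine (Finset.abs_sum_le_sum_abs _ _).trans ?_
  calc ∑ k, |A i k * v k| ≤ ∑ _k : Fin n, C * ‖v‖ := by
        refine Finset.sum_le_sum fun k _ => ?_
        rw [abs_mul]
        exact mul_le_mul (hA i k) (PiLp.norm_apply_le v k) (abs_nonneg _)
          ((abs_nonneg _).trans (hA i k))
    _ = _ := by simp; ring

/-- The anisotropic scaling `T` has inverse of size `ρ⁻ᴺ`, and passing from vectors `V j` to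
`ρ ^ (j + 1) • T⁻¹ (V j)` does not make the maximal minors degenerate. -/
lemma exists_scaling_bounds (d N L : ℕ) (hL : L ≤ N) {B : ℝ} (hB : 1 < B) :
    ∃ K ≥ 1, ∀ Γ : Fin N → E d, (∀ i, ‖Γ i‖ ≤ B) →
      (B ^ 2)⁻¹ ≤ ((Matrix.of fun k i => Γ i k)ᵀ * (Matrix.of fun k i => Γ i k)).det →
      ∀ ρ : ℝ, 0 < ρ → ρ ≤ 1 → ∀ T : E d ≃ₗ[ℝ] E d,
        (∀ i : Fin N, T (Γ i) = ρ ^ ((i : ℕ) + 1) • Γ i) →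
        (∀ v, (∀ i, ⟪Γ i, v⟫ = 0) → T v = ρ ^ N • v) →
        (∀ v, ρ ^ N * ‖T.symm v‖ ≤ K * ‖v‖) ∧
        ∀ V : Fin L → E d, minorSqSum (Matrix.of fun k j => V j k) ≤
          K * minorSqSum (Matrix.of fun k j => (ρ ^ ((j : ℕ) + 1) • T.symm (V j)) k) := by
  obtain ⟨C, hC, hcoords⟩ := exists_bounded_coords d N hB
  have hB0 : 0 < B := by linarith
  have hC0 : 0 < C := by linarith
  set c : ℝ := (d : ℝ) ^ L * (((N + d : ℕ) : ℝ) ^ L * (B ^ L) ^ 2) *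
    (((N + d : ℕ) : ℝ) ^ L * ((d : ℝ) ^ L * ((C + 1 + N * (B * C)) ^ L) ^ 2)) with hc
  have hc0 : 0 ≤ c := by positivity
  set b : ℝ := 2 * (N * (d * C * B)) + 1 with hb
  have hb1 : 1 ≤ b := by
    have : 0 ≤ 2 * (N * (d * C * B)) := by positivity
    linarith
  refine ⟨b + c, by linarith, fun Γ hΓ hdet ρ hρ hρ1 T hT hTperp => ?_⟩
  obtain ⟨A, hA, hperp⟩ := hcoords Γ hΓ hdet
  have hsum : ∀ (v : E d) (r : Fin N → ℝ), (∀ i, |r i| ≤ 1) →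
      ‖∑ i, (r i * (A *ᵥ v.ofLp) i) • Γ i‖ ≤ N * (d * C * B) * ‖v‖ := by
    intro v r hr
    refine (norm_sum_le _ _).trans ?_
    calc ∑ i, ‖(r i * (A *ᵥ v.ofLp) i) • Γ i‖ ≤ ∑ _i : Fin N, (d * C * ‖v‖) * B := by
          refine Finset.sum_le_sum fun i _ => ?_
          rw [norm_smul, Real.norm_eq_abs, abs_mul]
          refine mul_le_mul ?_ (hΓ i) (norm_nonneg _) (by positivity)
          exact (mul_le_of_le_one_left (abs_nonneg _) (hr i)).trans (abs_mulVec_le hA v i)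
      _ = _ := by simp; ring
  refine ⟨fun v => ?_, fun V => ?_⟩
  · have hsymm : ρ ^ N • T.symm v = ∑ i : Fin N,
        (ρ ^ (N - ((i : ℕ) + 1)) * (A *ᵥ v.ofLp) i) • Γ i +
          (v - ∑ i : Fin N, (1 * (A *ᵥ v.ofLp) i) • Γ i) := by
      apply T.injective
      rw [map_smul, LinearEquiv.apply_symm_apply, map_add, map_sum]
      simp only [one_mul]
      rw [hTperp _ (hperp v), smul_sub, Finset.smul_sum]
      have : ∀ i : Fin N, T ((ρ ^ (N - ((i : ℕ) + 1)) * (A *ᵥ v.ofLp) i) • Γ i) =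
          ρ ^ N • (A *ᵥ v.ofLp) i • Γ i := by
        intro i
        rw [map_smul, hT, smul_smul, smul_smul, mul_right_comm, ← pow_add,
          Nat.sub_add_cancel (by have := i.2; omega)]
      rw [Finset.sum_congr rfl fun i _ => this i]
      abel
    calc ρ ^ N * ‖T.symm v‖ = ‖ρ ^ N • T.symm v‖ := by
          rw [norm_smul, Real.norm_of_nonneg (by positivity)]
      _ ≤ N * (d * C * B) * ‖v‖ + (‖v‖ + N * (d * C * B) * ‖v‖) := by
          rw [hsymm]
          refine (norm_add_le _ _).trans (add_le_add ?_ ((norm_sub_le _ _).trans ?_))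
          · refine hsum v _ fun i => ?_
            rw [abs_of_nonneg (by positivity)]
            exact pow_le_one₀ hρ.le hρ1
          · gcongr
            exact hsum v (fun _ => 1) fun i => by simp
      _ = b * ‖v‖ := by rw [hb]; ring
      _ ≤ (b + c) * ‖v‖ := by gcongr; linarith
  · have hTv : ∀ (v : E d) (k : Fin d), T v k = ∑ i : Fin N, Γ i k *
        (ρ ^ ((i : ℕ) + 1) * (A *ᵥ v.ofLp) i) +
          ρ ^ N * (v k - ∑ i : Fin N, Γ i k * (A *ᵥ v.ofLp) i) := by
      intro v k
      have : T v = ∑ i : Fin N, (A *ᵥ v.ofLp) i • ρ ^ ((i : ℕ) + 1) • Γ i +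
          ρ ^ N • (v - ∑ i : Fin N, (A *ᵥ v.ofLp) i • Γ i) := by
        rw [← hTperp _ (hperp v), map_sub, map_sum]
        simp only [map_smul, hT]
        abel
      rw [this]
      simp [mul_comm, mul_assoc]
    set W : Matrix (Fin d) (Fin L) ℝ :=
      Matrix.of fun k j => (ρ ^ ((j : ℕ) + 1) • T.symm (V j)) k with hW
    set P : Matrix (Fin d) (Fin N ⊕ Fin d) ℝ :=
      Matrix.fromCols (Matrix.of fun k i => Γ i k) 1 with hP
    set Q : Matrix (Fin N ⊕ Fin d) (Fin d) ℝ :=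
      Matrix.fromRows A (1 - (Matrix.of fun k i => Γ i k) * A) with hQ
    have hPb : ∀ k i, |P k i| ≤ B := by
      rintro k (i | i)
      · exact (PiLp.norm_apply_le (Γ i) k).trans (hΓ i)
      · simp only [hP, Matrix.fromCols_apply_inr, Matrix.one_apply]
        split_ifs <;> simp <;> linarith
    have hQb : ∀ i k, |Q i k| ≤ C + 1 + N * (B * C) := by
      have h0 : 0 ≤ N * (B * C) := by positivity
      rintro (i | i) k
      · have := hA i k
        simp only [hQ, Matrix.fromRows_apply_inl]
        linarith
      · simp only [hQ, Matrix.fromRows_apply_inr, Matrix.sub_apply]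
        have h1 : |(1 : Matrix (Fin d) (Fin d) ℝ) i k| ≤ 1 := by
          rw [Matrix.one_apply]; split_ifs <;> simp
        have h2 : |((Matrix.of fun k i => Γ i k) * A) i k| ≤ N * (B * C) := by
          rw [Matrix.mul_apply]
          refine (Finset.abs_sum_le_sum_abs _ _).trans ?_
          calc _ ≤ ∑ _j : Fin N, B * C := by
                refine Finset.sum_le_sum fun j _ => ?_
                rw [abs_mul]
                exact mul_le_mul ((PiLp.norm_apply_le (Γ j) i).trans (hΓ j)) (hA j k)
                  (abs_nonneg _) hB0.le
            _ = _ := by simp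
        have := abs_sub ((1 : Matrix (Fin d) (Fin d) ℝ) i k)
          (((Matrix.of fun k i => Γ i k) * A) i k)
        linarith
    have hfactor : (Matrix.of fun k j => V j k) = P * Matrix.of fun k (j : Fin L) =>
        ρ ^ frameExponent N d k * ((ρ ^ ((j : ℕ) + 1))⁻¹ * (Q * W) k j) := by
      ext k j
      have hV : V j = (ρ ^ ((j : ℕ) + 1))⁻¹ • T (ρ ^ ((j : ℕ) + 1) • T.symm (V j)) := by
        rw [map_smul, smul_smul, inv_mul_cancel₀ (by positivity), one_smul,
          LinearEquiv.apply_symm_apply]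
      have hl : ∀ i : Fin N, (Q * W) (Sum.inl i) j =
          (A *ᵥ (ρ ^ ((j : ℕ) + 1) • T.symm (V j)).ofLp) i := fun i => rfl
      have hr : ∀ i : Fin d, (Q * W) (Sum.inr i) j = (ρ ^ ((j : ℕ) + 1) • T.symm (V j)) i -
          ∑ l : Fin N, Γ l i * (A *ᵥ (ρ ^ ((j : ℕ) + 1) • T.symm (V j)).ofLp) l := by
        intro i
        have : (Q * W) (Sum.inr i) j =
            ((1 - (Matrix.of fun k i => Γ i k) * A : Matrix (Fin d) (Fin d) ℝ) * W) i j := rfl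
        rw [this, Matrix.sub_mul, Matrix.one_mul, Matrix.mul_assoc]
        rfl
      rw [Matrix.of_apply, Matrix.mul_apply, Fintype.sum_sum_type]
      simp only [Matrix.of_apply, hl, hr]
      conv_lhs => rw [hV]
      rw [PiLp.smul_apply, hTv]
      simp only [hP, Matrix.fromCols_apply_inl, Matrix.fromCols_apply_inr, Matrix.one_apply,
        frameExponent, Sum.elim_inl, Sum.elim_inr, Matrix.of_apply, ite_mul, one_mul, zero_mul,
        Finset.sum_ite_eq, Finset.mem_univ, if_true, smul_eq_mul, mul_add, Finset.mul_sum]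
      congr 1
      · exact Finset.sum_congr rfl fun i _ => by ring
      · ring
    calc minorSqSum (Matrix.of fun k j => V j k)
        ≤ (d : ℝ) ^ L * (((N + d : ℕ) : ℝ) ^ L * (B ^ L) ^ 2) * minorSqSum (Q * W) := by
          rw [hfactor]
          refine (minorSqSum_mul_le P _ hPb).trans ?_
          simp only [Fintype.card_sum, Fintype.card_fin]
          gcongr
          exact minorSqSum_scaled_le hL hρ hρ1 _
      _ ≤ c * minorSqSum W := by
          rw [hc, mul_assoc _ _ (minorSqSum W)]
          gcongr
          simpa only [Fintype.card_sum, Fintype.card_fin] using minorSqSum_mul_le Q W hQb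
      _ ≤ (b + c) * minorSqSum W := by
          gcongr
          · exact minorSqSum_nonneg _
          · linarith

lemma iteratedDeriv_rescaled {d n : ℕ} {γ : ℝ → E d} (hγ : ContDiff ℝ (n : ℕ∞) γ) (s₀ ρ : ℝ)
    (S : E d →L[ℝ] E d) (j : ℕ) (hj : j + 1 ≤ n) :
    iteratedDeriv (j + 1) (fun s => S (γ (s₀ + ρ * s) - γ s₀)) =
      fun s => ρ ^ (j + 1) • S (iteratedDeriv (j + 1) γ (s₀ + ρ * s)) := by
  have step : ∀ i < n, ∀ s, HasDerivAt (fun s => S (iteratedDeriv i γ (s₀ + ρ * s)))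
      (ρ • S (iteratedDeriv (i + 1) γ (s₀ + ρ * s))) s := by
    intro i hi s
    have h1 : HasDerivAt (iteratedDeriv i γ) (iteratedDeriv (i + 1) γ (s₀ + ρ * s))
        (s₀ + ρ * s) := by
      rw [iteratedDeriv_succ]
      exact (hγ.differentiable_iteratedDeriv i (by exact_mod_cast hi) _).hasDerivAt
    have h2 : HasDerivAt (fun s => s₀ + ρ * s) ρ s := by
      simpa using ((hasDerivAt_id s).const_mul ρ).const_add s₀
    have h3 := S.hasFDerivAt.comp_hasDerivAt s (h1.scomp s h2)
    rw [map_smul] at h3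
    exact h3
  induction j with
  | zero =>
    ext1 s
    rw [zero_add, iteratedDeriv_one]
    have := (step 0 (by omega) s).sub_const (S (γ s₀))
    simp only [iteratedDeriv_zero, ← map_sub] at this
    rw [this.deriv]
    simp
  | succ j ih =>
    ext1 s
    rw [iteratedDeriv_succ, ih (by omega)]
    have := (step (j + 1) (by omega) s).const_smul (ρ ^ (j + 1))
    rw [smul_smul, ← pow_succ] at this
    exact this.deriv

theorem stmt11 (d N : ℕ) (hN : 2 ≤ N) (hNd : N ≤ d) (B : ℝ) (hB : 1 < B) :
    ∃ B₁ > 1, ∀ γ : ℝ → E d, CurveClass B N γ →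
      ∀ s₀ ∈ segI, ∀ ρ : ℝ, 0 < ρ → ρ ≤ (B ^ (2 * d))⁻¹ →
        Set.Icc (s₀ - ρ) (s₀ + ρ) ⊆ segI →
        ∀ T : E d ≃ₗ[ℝ] E d,
          (∀ i : ℕ, 1 ≤ i → i ≤ N →
            T (iteratedDeriv i γ s₀) = ρ ^ i • iteratedDeriv i γ s₀) →
          (∀ v : E d, (∀ i : ℕ, 1 ≤ i → i ≤ N → ⟪iteratedDeriv i γ s₀, v⟫ = 0) →
            T v = ρ ^ N • v) →
          CurveClass B₁ (N - 1) (fun s => T.symm (γ (s₀ + ρ * s) - γ s₀)) := by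
  obtain ⟨L, rfl⟩ : ∃ L, N = L + 1 := ⟨N - 1, by omega⟩
  rw [Nat.add_sub_cancel]
  obtain ⟨K, hK, hscale⟩ := exists_scaling_bounds d (L + 1) L (by omega) hB
  have hB0 : 0 < B := by linarith
  have hK0 : 0 < K := by linarith
  set c : ℝ := (d : ℝ) ^ (L + 1) * ((L + 1) ^ 2 * B ^ 2) * (K * L.factorial) with hc
  have hc0 : 0 ≤ c := by positivity
  refine ⟨K * B + (L + 1) * B + c * B ^ 2, ?_, ?_⟩
  · have : 0 ≤ (L + 1) * B + c * B ^ 2 := by positivity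
    nlinarith
  set B₁ : ℝ := K * B + (L + 1) * B + c * B ^ 2 with hB₁
  have hB₁1 : 1 ≤ B₁ := by
    have : 0 ≤ (L + 1) * B + c * B ^ 2 := by positivity
    nlinarith
  rintro γ ⟨hγ, hbound, hgram⟩ s₀ hs₀ ρ hρ hρB hsub T hT hTperp
  have hρ1 : ρ ≤ 1 := hρB.trans (inv_le_one_of_one_le₀ (one_le_pow₀ hB.le))
  obtain ⟨hsymm, hminor⟩ := hscale (fun i => iteratedDeriv ((i : ℕ) + 1) γ s₀)
    (fun i => hbound _ (by have := i.2; omega) s₀ hs₀) (hgram s₀ hs₀) ρ hρ hρ1 T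
    (fun i => hT _ (by omega) (by have := i.2; omega))
    (fun v hv => hTperp v fun i hi hi' => by
      have := hv ⟨i - 1, by omega⟩
      simpa [Nat.sub_add_cancel hi] using this)
  have hmem : ∀ s ∈ segI, s₀ + ρ * s ∈ segI := by
    intro s hs
    obtain ⟨h1, h2⟩ := hs
    exact hsub ⟨by nlinarith, by nlinarith⟩
  set S : E d →L[ℝ] E d := T.symm.toLinearMap.toContinuousLinearMap with hS
  set γ' : ℝ → E d := fun s => T.symm (γ (s₀ + ρ * s) - γ s₀) with hγ'
  have hder : ∀ j, j + 1 ≤ 2 * d → ∀ s, iteratedDeriv (j + 1) γ' s =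
      ρ ^ (j + 1) • T.symm (iteratedDeriv (j + 1) γ (s₀ + ρ * s)) := fun j hj s =>
    congrFun (iteratedDeriv_rescaled hγ s₀ ρ S j hj) s
  have hγ'smooth : ContDiff ℝ ((2 * d : ℕ) : ℕ∞) γ' :=
    S.contDiff.comp ((hγ.comp (contDiff_const.add (contDiff_const.mul contDiff_id))).sub
      contDiff_const)
  have hhigh : ∀ j, L + 1 ≤ j → j ≤ 2 * d → ∀ s ∈ segI, ‖iteratedDeriv j γ' s‖ ≤ K * B := by
    intro j hLj hj s hs
    obtain ⟨i, rfl⟩ : ∃ i, j = i + 1 := ⟨j - 1, by omega⟩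
    rw [hder i hj, norm_smul, Real.norm_of_nonneg (by positivity)]
    calc ρ ^ (i + 1) * ‖T.symm (iteratedDeriv (i + 1) γ (s₀ + ρ * s))‖
        ≤ ρ ^ (L + 1) * ‖T.symm (iteratedDeriv (i + 1) γ (s₀ + ρ * s))‖ := by
          gcongr ?_ * _
          exact pow_le_pow_of_le_one hρ.le hρ1 hLj
      _ ≤ K * ‖iteratedDeriv (i + 1) γ (s₀ + ρ * s)‖ := hsymm _
      _ ≤ K * B := by
          gcongr
          exact hbound _ hj _ (hmem s hs)
  have hzero : ∀ j ≤ L, ‖iteratedDeriv j γ' 0‖ ≤ B := by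
    rintro (_ | j) hj
    · simp [hγ', hB0.le]
    · rw [hder j (by omega), mul_zero, add_zero, ← map_smul, ← hT _ (by omega) (by omega),
        LinearEquiv.symm_apply_apply]
      exact hbound _ (by omega) _ hs₀
  have hlow : ∀ k ≤ L + 1, ∀ s ∈ segI, ‖iteratedDeriv (L + 1 - k) γ' s‖ ≤ K * B + k * B := by
    intro k
    induction k with
    | zero => intro _ s hs; simpa using hhigh (L + 1) le_rfl (by omega) s hs
    | succ k ih =>
      intro hk s hs
      set j := L + 1 - (k + 1) with hj
      have hj1 : L + 1 - k = j + 1 := by omega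
      rw [hj1] at ih
      have hmv := (convex_Icc (-1 : ℝ) 1).norm_image_sub_le_of_norm_deriv_le
        (f := iteratedDeriv j γ') (C := K * B + k * B) (x := 0) (y := s)
        (fun x _ => hγ'smooth.differentiable_iteratedDeriv j
          (by exact_mod_cast (by omega : j < 2 * d)) x)
        (fun x hx => by
          rw [← iteratedDeriv_succ]
          exact ih (by omega) x hx) (by norm_num) hs
      have hs1 : ‖s - 0‖ ≤ 1 := by rw [sub_zero]; exact abs_le.2 hs
      have h0 := hzero j (by omega)
      have htri := norm_le_norm_add_norm_sub' (iteratedDeriv j γ' s) (iteratedDeriv j γ' 0)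
      have : (K * B + k * B) * ‖s - 0‖ ≤ K * B + k * B :=
        mul_le_of_le_one_right (by positivity) hs1
      push_cast
      linarith
  refine ⟨hγ'smooth, fun j hj s hs => ?_, fun s hs => ?_⟩
  · have hcB : 0 ≤ c * B ^ 2 := by positivity
    have hLB : 0 ≤ (L + 1) * B := by positivity
    rcases le_total (L + 1) j with h | h
    · have := hhigh j h hj s hs
      linarith
    · have := hlow (L + 1 - j) (by omega) s hs
      rw [Nat.sub_sub_self h] at this
      have h2 : ((L + 1 - j : ℕ) : ℝ) * B ≤ (L + 1) * B := by
        gcongr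
        exact_mod_cast Nat.sub_le _ _
      linarith
  · set G' := ((Matrix.of fun i (j : Fin L) => iteratedDeriv ((j : ℕ) + 1) γ' s i)ᵀ *
      (Matrix.of fun (i : Fin d) (j : Fin L) => iteratedDeriv ((j : ℕ) + 1) γ' s i)).det with hG'
    have hmain : (B ^ 2)⁻¹ ≤ c * G' := by
      have hG := hgram _ (hmem s hs)
      set G := ((Matrix.of fun i (j : Fin (L + 1)) =>
          iteratedDeriv ((j : ℕ) + 1) γ (s₀ + ρ * s) i)ᵀ *
        (Matrix.of fun (i : Fin d) (j : Fin (L + 1)) =>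
          iteratedDeriv ((j : ℕ) + 1) γ (s₀ + ρ * s) i)).det with hGdef
      have hG0 : 0 ≤ G := (inv_nonneg.2 (sq_nonneg B)).trans hG
      calc (B ^ 2)⁻¹ ≤ G := hG
        _ ≤ ((L + 1).factorial : ℝ) * G := by
            refine le_mul_of_one_le_left hG0 ?_
            exact_mod_cast Nat.one_le_iff_ne_zero.2 (Nat.factorial_ne_zero _)
        _ ≤ (d : ℝ) ^ (L + 1) * ((L + 1) ^ 2 * B ^ 2) * minorSqSum
              (Matrix.of fun k (j : Fin L) =>
                iteratedDeriv ((j : ℕ) + 1) γ (s₀ + ρ * s) k) := by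
            rw [hGdef, factorial_mul_det_gram]
            refine (minorSqSum_succ_le _ (B := B) fun i => ?_).trans_eq ?_
            · exact (PiLp.norm_apply_le _ i).trans (hbound _ (by simp; omega) _ (hmem s hs))
            · rw [Fintype.card_fin]
              rfl
        _ ≤ (d : ℝ) ^ (L + 1) * ((L + 1) ^ 2 * B ^ 2) * (K * (L.factorial * G')) := by
            gcongr
            rw [hG', factorial_mul_det_gram]
            refine (hminor _).trans_eq ?_
            congr 3
            ext k j
            dsimp only
            rw [hder j (by have := j.2; omega)]
        _ = c * G' := by rw [hc]; ring
    have hB₁c : c * B ^ 2 ≤ B₁ ^ 2 := by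
      have : 0 ≤ K * B + (L + 1) * B := by positivity
      nlinarith
    have hG'0 : 0 < G' := by
      by_contra! h
      have h1 : 0 < (B ^ 2)⁻¹ := by positivity
      nlinarith
    rw [inv_le_iff_one_le_mul₀ (by positivity)] at hmain ⊢
    nlinarith
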